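/- arXiv:1011.3680 — 6 statements merged into one kernel-verified Lean document; each statement's English description precedes it below -/
import Mathlib

section
/- For every dimension d ≥ 1, every n ≥ 1, and every choice of sample points t_1, …, t_n ∈ [0,1]^d, there exist monotone functions f⁺, f⁻ : [0,1]^d → [0,1] such that f⁺(t_k) = f⁻(t_k) for all k = 1, …, n and INT_d(f⁺) − INT_d(f⁻) ≥ 1 − n·2^{−d}. -/
open MeasureTheory

/-!
Label a point `s` of the cube `1` if `∏ (1 - s i) ≤ ∏ s i` and `0` otherwise. This labelling is
monotone in `s`. Let `f⁺` be the largest and `f⁻` the smallest monotone `[0,1]`-valued function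
taking the labels as values at the sample points: `f⁺` is `0` exactly on the union `A` of the lower
boxes `[0, t k]` of the points labelled `0`, and `f⁻` is `1` exactly on the union `B` of the upper
boxes `[t k, 1]` of the points labelled `1`. Hence `INT(f⁺) - INT(f⁻) = 1 - vol A - vol B`.
The volumes `∏ t k i` and `∏ (1 - t k i)` have product at most `4⁻ᵈ`, because `s (1 - s) ≤ 1/4`, and
the label selects the smaller of the two, so each sample point contributes at most `2⁻ᵈ` (lemma
`le_of_prod_le_prod`) to `vol A + vol B`.
-/

/-- If the `u i` and `v i` are nonnegative with `u i + v i = 1`, then the smaller of the products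
`∏ u i` and `∏ v i` is at most `2⁻ᵈ`. -/
lemma le_of_prod_le_prod {d : ℕ} (u v : Fin d → ℝ) (hu : ∀ i, 0 ≤ u i) (hv : ∀ i, 0 ≤ v i)
    (huv : ∀ i, u i + v i = 1) (h : ∏ i, u i ≤ ∏ i, v i) : ∏ i, u i ≤ 1 / 2 ^ d := by
  have h0 : 0 ≤ ∏ i, u i := Finset.prod_nonneg fun i _ => hu i
  have h1 : (∏ i, u i) * ∏ i, v i ≤ (1 / 2 ^ d) ^ 2 := by
    rw [← Finset.prod_mul_distrib]
    calc ∏ i, u i * v i ≤ ∏ _i : Fin d, (1 / 4 : ℝ) := by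
          refine Finset.prod_le_prod (fun i _ => mul_nonneg (hu i) (hv i)) fun i _ => ?_
          nlinarith [sq_nonneg (u i - v i), huv i]
      _ = (1 / 2 ^ d) ^ 2 := by
          rw [Finset.prod_const, Finset.card_univ, Fintype.card_fin, div_pow, div_pow, ← pow_mul,
            mul_comm d 2, pow_mul]
          norm_num
  refine le_of_sq_le_sq ?_ (by positivity)
  nlinarith [mul_le_mul_of_nonneg_left h h0]

/-- For every `d ≥ 1`, `n ≥ 1` and sample points `t 1, …, t n ∈ [0,1]^d`,
there are monotone functions `f⁺, f⁻ : [0,1]^d → [0,1]` agreeing at all sample points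
with `INT_d(f⁺) - INT_d(f⁻) ≥ 1 - n·2^{-d}`. -/
theorem monotone_integration_fooling (d n : ℕ) (hd : 1 ≤ d) (hn : 1 ≤ n)
    (t : Fin n → (Fin d → ℝ)) (ht : ∀ k, t k ∈ Set.Icc (0 : Fin d → ℝ) 1) :
    ∃ fp fm : (Fin d → ℝ) → ℝ,
      MonotoneOn fp (Set.Icc (0 : Fin d → ℝ) 1) ∧
      MonotoneOn fm (Set.Icc (0 : Fin d → ℝ) 1) ∧
      (∀ x ∈ Set.Icc (0 : Fin d → ℝ) 1, fp x ∈ Set.Icc (0 : ℝ) 1) ∧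
      (∀ x ∈ Set.Icc (0 : Fin d → ℝ) 1, fm x ∈ Set.Icc (0 : ℝ) 1) ∧
      (∀ k, fp (t k) = fm (t k)) ∧
      (∫ x in Set.Icc (0 : Fin d → ℝ) 1, fp x) -
        (∫ x in Set.Icc (0 : Fin d → ℝ) 1, fm x) ≥ 1 - (n : ℝ) / 2 ^ d := by
  classical
  -- `P k` says that the `k`-th sample point is labelled `1`.
  let P : Fin n → Prop := fun k => ∏ i, (1 - t k i) ≤ ∏ i, t k i
  have hP : ∀ j k, t j ≤ t k → P j → P k := fun j k hjk hj =>
    calc ∏ i, (1 - t k i) ≤ ∏ i, (1 - t j i) :=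
          Finset.prod_le_prod (fun i _ => sub_nonneg.2 ((ht k).2 i))
            fun i _ => sub_le_sub_left (hjk i) 1
      _ ≤ ∏ i, t j i := hj
      _ ≤ ∏ i, t k i := Finset.prod_le_prod (fun i _ => (ht j).1 i) fun i _ => hjk i
  let A : Set (Fin d → ℝ) := ⋃ k ∈ Finset.univ.filter (fun k => ¬ P k), Set.Icc 0 (t k)
  let B : Set (Fin d → ℝ) := ⋃ k ∈ Finset.univ.filter P, Set.Icc (t k) 1
  have memA : ∀ x, x ∈ A ↔ ∃ k, ¬ P k ∧ 0 ≤ x ∧ x ≤ t k := by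
    intro x
    simp only [A, Set.mem_iUnion, Finset.mem_filter, Finset.mem_univ, true_and, Set.mem_Icc,
      exists_prop]
  have memB : ∀ x, x ∈ B ↔ ∃ k, P k ∧ t k ≤ x ∧ x ≤ 1 := by
    intro x
    simp only [B, Set.mem_iUnion, Finset.mem_filter, Finset.mem_univ, true_and, Set.mem_Icc,
      exists_prop]
  have mA : MeasurableSet A := Finset.measurableSet_biUnion _ fun _ _ => measurableSet_Icc
  have mB : MeasurableSet B := Finset.measurableSet_biUnion _ fun _ _ => measurableSet_Icc
  have sA : A ⊆ Set.Icc 0 1 := fun x hx => by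
    obtain ⟨k, -, h0, h1⟩ := (memA x).1 hx
    exact ⟨h0, h1.trans (ht k).2⟩
  have sB : B ⊆ Set.Icc 0 1 := fun x hx => by
    obtain ⟨k, -, h0, h1⟩ := (memB x).1 hx
    exact ⟨(ht k).1.trans h0, h1⟩
  have hvA : volume.real A ≤ ∑ k ∈ Finset.univ.filter (fun k => ¬ P k), (1 / 2 ^ d : ℝ) := by
    refine (measureReal_biUnion_finset_le _ _).trans (Finset.sum_le_sum fun k hk => ?_)
    have hk' : ¬ P k := (Finset.mem_filter.1 hk).2
    rw [measureReal_def, Real.volume_Icc_pi_toReal (ht k).1]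
    simp only [Pi.zero_apply, sub_zero]
    exact le_of_prod_le_prod _ (fun i => 1 - t k i) (fun i => (ht k).1 i)
      (fun i => sub_nonneg.2 ((ht k).2 i)) (fun i => by ring) (not_le.1 hk').le
  have hvB : volume.real B ≤ ∑ k ∈ Finset.univ.filter P, (1 / 2 ^ d : ℝ) := by
    refine (measureReal_biUnion_finset_le _ _).trans (Finset.sum_le_sum fun k hk => ?_)
    have hk' : P k := (Finset.mem_filter.1 hk).2
    rw [measureReal_def, Real.volume_Icc_pi_toReal (ht k).2]
    simp only [Pi.one_apply]
    exact le_of_prod_le_prod _ (t k) (fun i => sub_nonneg.2 ((ht k).2 i))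
      (fun i => (ht k).1 i) (fun i => by ring) hk'
  have hsum : volume.real A + volume.real B ≤ n / 2 ^ d := by
    have h := Finset.sum_filter_add_sum_filter_not Finset.univ P fun _ => (1 / 2 ^ d : ℝ)
    have h' : ∑ _k : Fin n, (1 / 2 ^ d : ℝ) = n / 2 ^ d := by
      simp [div_eq_mul_inv]
    linarith
  have hC : volume.real (Set.Icc (0 : Fin d → ℝ) 1) = 1 := by
    rw [measureReal_def, Real.volume_Icc_pi_toReal zero_le_one]
    simp
  have fC : volume (Set.Icc (0 : Fin d → ℝ) 1) ≠ ⊤ := isCompact_Icc.measure_lt_top.ne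
  have hind : ∀ S : Set (Fin d → ℝ), MeasurableSet S → S ⊆ Set.Icc 0 1 →
      ∫ x in Set.Icc (0 : Fin d → ℝ) 1, S.indicator (fun _ => (1 : ℝ)) x = volume.real S := by
    intro S mS sS
    rw [setIntegral_indicator mS, Set.inter_eq_self_of_subset_right sS]
    simp
  have iC : IntegrableOn (fun _ => (1 : ℝ)) (Set.Icc (0 : Fin d → ℝ) 1) := integrableOn_const fC
  have iA : IntegrableOn (A.indicator fun _ => (1 : ℝ)) (Set.Icc (0 : Fin d → ℝ) 1) :=
    iC.indicator mA
  refine ⟨fun x => 1 - A.indicator (fun _ => 1) x, B.indicator fun _ => 1,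
    ?_, ?_, ?_, ?_, ?_, ?_⟩
  · intro x hx y hy hxy
    by_cases hyA : y ∈ A
    · have hxA : x ∈ A := by
        obtain ⟨k, hk, -, h1⟩ := (memA y).1 hyA
        exact (memA x).2 ⟨k, hk, hx.1, hxy.trans h1⟩
      simp [hyA, hxA]
    · by_cases hxA : x ∈ A <;> simp [hyA, hxA]
  · intro x hx y hy hxy
    by_cases hxB : x ∈ B
    · have hyB : y ∈ B := by
        obtain ⟨k, hk, h0, -⟩ := (memB x).1 hxB
        exact (memB y).2 ⟨k, hk, h0.trans hxy, hy.2⟩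
      simp [hyB, hxB]
    · by_cases hyB : y ∈ B <;> simp [hyB, hxB]
  · intro x _
    by_cases hxA : x ∈ A <;> simp [hxA]
  · intro x _
    by_cases hxB : x ∈ B <;> simp [hxB]
  · intro k
    by_cases hk : P k
    · have h1 : t k ∈ B := (memB _).2 ⟨k, hk, le_rfl, (ht k).2⟩
      have h2 : t k ∉ A := fun h => by
        obtain ⟨j, hj, -, hkj⟩ := (memA _).1 h
        exact hj (hP k j hkj hk)
      simp [h1, h2]
    · have h1 : t k ∈ A := (memA _).2 ⟨k, hk, (ht k).1, le_rfl⟩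
      have h2 : t k ∉ B := fun h => by
        obtain ⟨j, hj, hjk, -⟩ := (memB _).1 h
        exact hk (hP j k hjk hj)
      simp [h1, h2]
  · have h1 : ∫ x in Set.Icc (0 : Fin d → ℝ) 1, (1 - A.indicator (fun _ => (1 : ℝ)) x)
        = 1 - volume.real A := by
      rw [integral_sub iC iA, hind A mA sA, setIntegral_const, hC]
      simp
    rw [h1, hind B mB sB]
    linarith
end

section
/- For every dimension d ≥ 1, every n ≥ 1, every adaptive algorithm A using n function values satisfies sup over monotone f : [0,1]^d → [0,1] of |INT_d(f) − A(f)| ≥ (1/2)·(1 − n·2^{−d}); that is, the n-th minimal worst case error for integration over the class of monotone functions is at least (1/2)·(1 − n·2^{−d}). -/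
open MeasureTheory

/-!
The proof is an adversary argument. Let the oracle answer according to the threshold function
`thresholdFn`, which is `1` where `∑ i, x i ≥ d / 2` and `0` elsewhere, and let `s k` be the points
the algorithm then visits. Two monotone `{0,1}`-valued functions agree with it at every `s k`: the
smallest one, the indicator of the union of the orthants `[s k, ∞)` over the points answered `1`,
and the largest one, the indicator of the complement of the union of the orthants `(-∞, s k]` over
the points answered `0`. The algorithm returns the same number for both.

By AM-GM (`prod_le_half_pow`), a box `[0, s]` with `∑ i, s i ≤ d / 2` and a box `[s, 1]` with
`∑ i, s i ≥ d / 2` have volume at most `2⁻ᵈ`. Each sample point contributes one such box, so the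
integrals of the two functions differ by at least `1 - n 2⁻ᵈ`, and the error for one of them is at
least half of that.
-/

/-- The adaptively computed information values `y_k = f(t_k(y_1,…,y_{k-1}))`. -/
noncomputable def infoValues {d n : ℕ}
    (t : (k : Fin n) → (Fin k.1 → ℝ) → (Fin d → ℝ))
    (f : (Fin d → ℝ) → ℝ) (k : Fin n) : ℝ :=
  f (t k (fun j => infoValues t f ⟨j.1, j.2.trans k.2⟩))
termination_by k.1

/-- The algorithm cannot distinguish `f` from a function that agrees with `f` at all points visited
when the algorithm is run on `f`. -/
lemma infoValues_congr {d n : ℕ} (t : (k : Fin n) → (Fin k.1 → ℝ) → (Fin d → ℝ))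
    (f g : (Fin d → ℝ) → ℝ)
    (h : ∀ k : Fin n, g (t k (fun j => infoValues t f ⟨j.1, j.2.trans k.2⟩)) =
      f (t k (fun j => infoValues t f ⟨j.1, j.2.trans k.2⟩))) :
    infoValues t g = infoValues t f := by
  have key : ∀ m : ℕ, ∀ hm : m < n, infoValues t g ⟨m, hm⟩ = infoValues t f ⟨m, hm⟩ := by
    intro m
    induction m using Nat.strong_induction_on with
    | _ m ih =>
      intro hm
      rw [infoValues, infoValues, ← h ⟨m, hm⟩]
      congr 2
      funext j
      exact ih j.1 j.2 _
  funext k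
  exact key k.1 k.2

/-- The AM-GM inequality in the form needed for box volumes. -/
lemma prod_le_half_pow {d : ℕ} (a : Fin d → ℝ) (ha : ∀ i, 0 ≤ a i)
    (hs : ∑ i, a i ≤ (d : ℝ) / 2) : ∏ i, a i ≤ 1 / 2 ^ d := by
  -- multiply the bounds `2 a ≤ exp (2 a - 1)`
  calc ∏ i, a i ≤ ∏ i, (1 / 2 * Real.exp (2 * a i - 1)) := by
        refine Finset.prod_le_prod (fun i _ => ha i) (fun i _ => ?_)
        have := Real.add_one_le_exp (2 * a i - 1)
        linarith
    _ = (1 / 2) ^ d * Real.exp (2 * ∑ i, a i - d) := by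
        rw [Finset.prod_mul_distrib, ← Real.exp_sum, Finset.sum_sub_distrib, ← Finset.mul_sum]
        simp
    _ ≤ (1 / 2) ^ d * 1 := by
        gcongr
        rw [Real.exp_le_one_iff]
        linarith
    _ = 1 / 2 ^ d := by simp

lemma volume_upper_le {d : ℕ} (s : Fin d → ℝ) (hs : s ∈ Set.Icc (0 : Fin d → ℝ) 1)
    (h : (d : ℝ) / 2 ≤ ∑ i, s i) :
    (volume.restrict (Set.Icc (0 : Fin d → ℝ) 1)).real (Set.Ici s) ≤ 1 / 2 ^ d := by
  have hset : Set.Ici s ∩ Set.Icc (0 : Fin d → ℝ) 1 = Set.Icc s 1 := by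
    ext x
    simp only [Set.mem_inter_iff, Set.mem_Ici, Set.mem_Icc]
    exact ⟨fun hx => ⟨hx.1, hx.2.2⟩, fun hx => ⟨hx.1, hs.1.trans hx.1, hx.2⟩⟩
  rw [measureReal_restrict_apply measurableSet_Ici, hset, Measure.real,
    Real.volume_Icc_pi_toReal hs.2]
  refine prod_le_half_pow _ (fun i => sub_nonneg.2 (hs.2 i)) ?_
  simp only [Pi.one_apply, Finset.sum_sub_distrib]
  simp
  linarith

lemma volume_lower_le {d : ℕ} (s : Fin d → ℝ) (hs : s ∈ Set.Icc (0 : Fin d → ℝ) 1)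
    (h : ∑ i, s i ≤ (d : ℝ) / 2) :
    (volume.restrict (Set.Icc (0 : Fin d → ℝ) 1)).real (Set.Iic s) ≤ 1 / 2 ^ d := by
  have hset : Set.Iic s ∩ Set.Icc (0 : Fin d → ℝ) 1 = Set.Icc 0 s := by
    ext x
    simp only [Set.mem_inter_iff, Set.mem_Iic, Set.mem_Icc]
    exact ⟨fun hx => ⟨hx.2.1, hx.1⟩, fun hx => ⟨hx.2, hx.1, hx.2.trans hs.2⟩⟩
  rw [measureReal_restrict_apply measurableSet_Iic, hset, Measure.real,
    Real.volume_Icc_pi_toReal hs.1]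
  refine prod_le_half_pow _ (fun i => sub_nonneg.2 (hs.1 i)) ?_
  simpa using h

/-- The function whose values the adversary reports: the indicator of `∑ i, x i ≥ d / 2`. -/
noncomputable def thresholdFn (d : ℕ) : (Fin d → ℝ) → ℝ :=
  {x : Fin d → ℝ | (d : ℝ) / 2 ≤ ∑ i, x i}.indicator 1

/-- The indicator of an upper set is monotone. -/
lemma monotone_indicator_upper {d : ℕ} {U : Set (Fin d → ℝ)} (hU : IsUpperSet U) :
    Monotone (U.indicator (1 : (Fin d → ℝ) → ℝ)) := by
  intro x y hxy
  by_cases hx : x ∈ U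
  · simp [hx, hU hxy hx]
  · rw [Set.indicator_of_notMem hx]
    exact Set.indicator_nonneg (fun _ _ => zero_le_one) _

lemma indicator_mem_Icc {d : ℕ} (U : Set (Fin d → ℝ)) (x : Fin d → ℝ) :
    U.indicator (1 : (Fin d → ℝ) → ℝ) x ∈ Set.Icc (0 : ℝ) 1 := by
  by_cases hx : x ∈ U <;> simp [hx]

/-- every adaptive algorithm using `n` function values has worst case error
at least `(1/2)·(1 - n·2^{-d})` for integration over monotone functions
`f : [0,1]^d → [0,1]`. -/
theorem monotone_integration_lower_bound (d n : ℕ) (hd : 1 ≤ d) (hn : 1 ≤ n)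
    (t : (k : Fin n) → (Fin k.1 → ℝ) → (Fin d → ℝ))
    (ht : ∀ k y, t k y ∈ Set.Icc (0 : Fin d → ℝ) 1)
    (φ : (Fin n → ℝ) → ℝ) :
    ∃ f : (Fin d → ℝ) → ℝ,
      MonotoneOn f (Set.Icc (0 : Fin d → ℝ) 1) ∧
      (∀ x ∈ Set.Icc (0 : Fin d → ℝ) 1, f x ∈ Set.Icc (0 : ℝ) 1) ∧
      |(∫ x in Set.Icc (0 : Fin d → ℝ) 1, f x) - φ (infoValues t f)| ≥
        (1 / 2) * (1 - (n : ℝ) / 2 ^ d) := by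
  classical
  set s : Fin n → Fin d → ℝ :=
    fun k => t k (fun j => infoValues t (thresholdFn d) ⟨j.1, j.2.trans k.2⟩) with hs
  have hsmem : ∀ k, s k ∈ Set.Icc (0 : Fin d → ℝ) 1 := fun k => ht k _
  set H : Finset (Fin n) := Finset.univ.filter (fun k => (d : ℝ) / 2 ≤ ∑ i, s k i) with hH
  set G : Finset (Fin n) := Finset.univ.filter (fun k => ¬ (d : ℝ) / 2 ≤ ∑ i, s k i) with hG
  have hcard : (H.card : ℝ) + G.card = n := by
    have := Finset.card_filter_add_card_filter_not (s := (Finset.univ : Finset (Fin n)))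
      (fun k => (d : ℝ) / 2 ≤ ∑ i, s k i)
    rw [Finset.card_univ, Fintype.card_fin] at this
    exact_mod_cast this
  set U : Set (Fin d → ℝ) := ⋃ k ∈ H, Set.Ici (s k) with hU
  set L : Set (Fin d → ℝ) := ⋃ k ∈ G, Set.Iic (s k) with hL
  set μ := volume.restrict (Set.Icc (0 : Fin d → ℝ) 1) with hμ
  have hμ1 : IsProbabilityMeasure μ := by
    constructor
    rw [hμ, Measure.restrict_apply_univ, Real.volume_Icc_pi]
    simp
  have hUm : MeasurableSet U := Finset.measurableSet_biUnion _ fun _ _ => measurableSet_Ici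
  have hLm : MeasurableSet L := Finset.measurableSet_biUnion _ fun _ _ => measurableSet_Iic
  have hUup : IsUpperSet U := isUpperSet_iUnion₂ fun k _ => isUpperSet_Ici (s k)
  have hLlow : IsLowerSet L := isLowerSet_iUnion₂ fun k _ => isLowerSet_Iic (s k)
  have hUμ : μ.real U ≤ H.card * (1 / 2 ^ d) := by
    refine (measureReal_biUnion_finset_le _ _).trans ?_
    rw [← nsmul_eq_mul]
    exact Finset.sum_le_card_nsmul _ _ _ fun k hk =>
      volume_upper_le _ (hsmem k) (Finset.mem_filter.1 hk).2
  have hLμ : μ.real L ≤ G.card * (1 / 2 ^ d) := by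
    refine (measureReal_biUnion_finset_le _ _).trans ?_
    rw [← nsmul_eq_mul]
    exact Finset.sum_le_card_nsmul _ _ _ fun k hk =>
      volume_lower_le _ (hsmem k) (not_le.1 (Finset.mem_filter.1 hk).2).le
  -- Both fooling functions agree with the threshold function at the sample points; monotonicity of
  -- `x ↦ ∑ i, x i` keeps points answered `0` out of `U` and points answered `1` out of `L`.
  have hfU : infoValues t (U.indicator 1) = infoValues t (thresholdFn d) := by
    refine infoValues_congr t _ _ fun k => ?_
    change U.indicator 1 (s k) = thresholdFn d (s k)
    have hiff : s k ∈ U ↔ (d : ℝ) / 2 ≤ ∑ i, s k i := by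
      simp only [hU, hH, Set.mem_iUnion, Set.mem_Ici, Finset.mem_filter, Finset.mem_univ, true_and,
        exists_prop]
      exact ⟨fun ⟨j, hj, hjk⟩ => hj.trans (Finset.sum_le_sum fun i _ => hjk i),
        fun h => ⟨k, h, le_rfl⟩⟩
    simp only [thresholdFn, Set.indicator_apply, Set.mem_ofPred_eq, hiff]
  have hfL : infoValues t (Lᶜ.indicator 1) = infoValues t (thresholdFn d) := by
    refine infoValues_congr t _ _ fun k => ?_
    change Lᶜ.indicator 1 (s k) = thresholdFn d (s k)
    have hiff : s k ∈ Lᶜ ↔ (d : ℝ) / 2 ≤ ∑ i, s k i := by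
      rw [Set.mem_compl_iff, not_iff_comm]
      simp only [hL, hG, Set.mem_iUnion, Set.mem_Iic, Finset.mem_filter, Finset.mem_univ, true_and,
        exists_prop]
      exact ⟨fun h => ⟨k, h, le_rfl⟩,
        fun ⟨j, hj, hjk⟩ h => hj (h.trans (Finset.sum_le_sum fun i _ => hjk i))⟩
    simp only [thresholdFn, Set.indicator_apply, Set.mem_ofPred_eq, hiff]
  have hIU : ∫ x, U.indicator (1 : (Fin d → ℝ) → ℝ) x ∂μ = μ.real U := integral_indicator_one hUm
  have hIL : ∫ x, Lᶜ.indicator (1 : (Fin d → ℝ) → ℝ) x ∂μ = 1 - μ.real L := by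
    rw [integral_indicator_one hLm.compl, probReal_compl_eq_one_sub hLm]
  have hgap : 1 - (n : ℝ) / 2 ^ d ≤ (1 - μ.real L) - μ.real U := by
    have : (n : ℝ) / 2 ^ d = H.card * (1 / 2 ^ d) + G.card * (1 / 2 ^ d) := by
      rw [← hcard]; ring
    linarith
  set a := φ (infoValues t (thresholdFn d)) with ha
  by_cases hc : (1 / 2) * (1 - (n : ℝ) / 2 ^ d) ≤ a - μ.real U
  · refine ⟨U.indicator 1, (monotone_indicator_upper hUup).monotoneOn _,
      fun x _ => indicator_mem_Icc U x, ?_⟩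
    rw [hIU, hfU, ← ha, abs_sub_comm]
    exact hc.trans (le_abs_self _)
  · refine ⟨Lᶜ.indicator 1, (monotone_indicator_upper hLlow.compl).monotoneOn _,
      fun x _ => indicator_mem_Icc Lᶜ x, ?_⟩
    rw [hIL, hfL, ← ha]
    refine le_trans ?_ (le_abs_self _)
    linarith
end

section
/- There exists t_0 ∈ (0,1), independent of d and n, such that for every d ≥ 1 and every n-point set P ⊆ [0,1]^d × {0} ⊆ ℝ^{d+1}, the (d+1)-dimensional Lebesgue measure of the convex hull C of P ∪ ([0,1]^d × {1}) satisfies vol_{d+1}(C) ≤ (1 − t_0) + (d+1)·n·t_0·(10/11)^d. -/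
open MeasureTheory

/-!
The value `t₀ = 1/1000` works, even without the factor `d + 1`. The part of the hull above height
`t₀` lies in a box of volume `1 - t₀`, so it remains to show that the part below height `t₀` has
volume at most `n * t₀ * (10/11)^d`.

Let `y = (y', t)` be a point of the hull with `t ≤ t₀` and let `c = y' - (1/2, …, 1/2)`. The linear
functional `z ↦ ⟨c, z'⟩` cannot be much smaller on all of `P` than at `y`: otherwise a slightly
tilted half-space would contain `P` and the top face but not `y`. Hence some `p ∈ P` satisfies
`∑ i, ((y i - 1/2) * (p i - y i) + t₀) ≥ 0` (`hull_cases`).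

For a fixed `p` in the cube, the set of `y'` in the cube with this property is small by the
exponential Markov (Chernoff) bound (`volume_le_of_one_le_prod`): its volume is at most
`∏ i, ∫₀¹ exp (λ * ((x - 1/2) * (p i - x) + t₀)) dx`. The exponent has mean about `-λ/12` whatever
`p i` is, and for `λ = 12/5` each factor is at most `10/11` (`integral_expFactor_le`). A union
bound over `P` concludes.
-/
/-- A quadratic upper bound for `exp` on the range `s ≤ 3/20` of the exponents
`12/5 * ((x - 1/2) * (p - x))`, with `p ∈ [0,1]`. -/
lemma exp_le_quad {s : ℝ} (hs : s ≤ 3 / 20) : Real.exp s ≤ 1 + s + 27 / 50 * s ^ 2 := by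
  rcases le_total s 0 with h | h
  · -- With `a = -s ≥ 0`, `(1 + a + a²/2) * (1 - a + a²/2) = 1 + a⁴/4 ≥ 1`.
    have h1 := Real.quadratic_le_exp_of_nonneg (x := -s) (by linarith)
    have h2 : Real.exp s * Real.exp (-s) = 1 := by rw [← Real.exp_add]; simp
    have h3 : Real.exp s * (1 + -s + (-s) ^ 2 / 2) ≤ 1 :=
      (mul_le_mul_of_nonneg_left h1 (Real.exp_pos s).le).trans_eq h2
    have h4 : 0 < 1 + -s + (-s) ^ 2 / 2 := by nlinarith [sq_nonneg s]
    have h5 : Real.exp s ≤ 1 + s + s ^ 2 / 2 := by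
      refine le_of_mul_le_mul_right (h3.trans ?_) h4
      nlinarith [sq_nonneg (s ^ 2)]
    nlinarith [sq_nonneg s]
  · have h1 := Real.exp_bound' h (by linarith) (n := 3) (by norm_num)
    norm_num [Finset.sum_range_succ, Nat.factorial] at h1
    nlinarith [mul_le_mul_of_nonneg_left hs (sq_nonneg s)]

lemma integral_quad (p : ℝ) :
    ∫ x in (0 : ℝ)..1, (1 + 12 / 5 * ((x - 1 / 2) * (p - x))
      + 27 / 50 * (12 / 5 * ((x - 1 / 2) * (p - x))) ^ 2) =
      4 / 5 + 27 / 50 * (144 / 25) * ((p - 1 / 2) ^ 2 / 12 + 1 / 80) := by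
  -- The antiderivative is written in powers of `x - 1/2`, using `p - x = (p - 1/2) - (x - 1/2)`.
  have h : ∀ x : ℝ, HasDerivAt
      (fun x : ℝ => x
        + 12 / 5 * (-(x - 1 / 2) ^ 3 / 3 + (p - 1 / 2) * (x - 1 / 2) ^ 2 / 2)
        + 27 / 50 * (144 / 25) * ((p - 1 / 2) ^ 2 * (x - 1 / 2) ^ 3 / 3
          - (p - 1 / 2) * (x - 1 / 2) ^ 4 / 2 + (x - 1 / 2) ^ 5 / 5))
      (1 + 12 / 5 * ((x - 1 / 2) * (p - x))
        + 27 / 50 * (12 / 5 * ((x - 1 / 2) * (p - x))) ^ 2) x := by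
    intro x
    have k : ∀ n : ℕ,
        HasDerivAt (fun x : ℝ => (x - 1 / 2) ^ n) (n * (x - 1 / 2) ^ (n - 1)) x := by
      intro n
      simpa using! ((hasDerivAt_id x).sub_const (1 / 2 : ℝ)).pow n
    refine HasDerivAt.congr_deriv (((hasDerivAt_id x).add
      ((((k 3).neg.div_const 3).add
        (((k 2).const_mul (p - 1 / 2)).div_const 2)).const_mul (12 / 5))).add
      ((((((k 3).const_mul ((p - 1 / 2) ^ 2)).div_const 3).sub
        (((k 4).const_mul (p - 1 / 2)).div_const 2)).add
        ((k 5).div_const 5)).const_mul (27 / 50 * (144 / 25)))) ?_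
    push_cast
    norm_num
    ring
  rw [intervalIntegral.integral_eq_sub_of_hasDerivAt (fun x _ => h x)
    (Continuous.intervalIntegrable (by fun_prop) _ _)]
  ring

/-- The one-dimensional factor of the Chernoff bound:
`exp (λ * ((x - 1/2) * (p - x) + t₀))` on `[0,1]` and `0` elsewhere, with `λ = 12/5` and
`t₀ = 1/1000`. -/
noncomputable def expFactor (p : ℝ) : ℝ → ℝ :=
  (Set.Icc (0 : ℝ) 1).indicator fun x =>
    Real.exp (12 / 5 * ((x - 1 / 2) * (p - x) + 1 / 1000))

lemma expFactor_nonneg (p x : ℝ) : 0 ≤ expFactor p x :=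
  Set.indicator_nonneg (fun _ _ => (Real.exp_pos _).le) x

lemma integrable_expFactor (p : ℝ) : Integrable (expFactor p) :=
  (integrable_indicator_iff measurableSet_Icc).2
    (Continuous.continuousOn (by fun_prop)).integrableOn_Icc

lemma integral_expFactor_le {p : ℝ} (hp : p ∈ Set.Icc (0 : ℝ) 1) :
    ∫ x, expFactor p x ≤ 10 / 11 := by
  have he : Real.exp (12 / 5 * (1 / 1000)) ≤ 1003 / 1000 :=
    (exp_le_quad (by norm_num)).trans (by norm_num)
  have hq : ∀ x : ℝ, Real.exp (12 / 5 * ((x - 1 / 2) * (p - x) + 1 / 1000)) ≤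
      1003 / 1000 * (1 + 12 / 5 * ((x - 1 / 2) * (p - x))
        + 27 / 50 * (12 / 5 * ((x - 1 / 2) * (p - x))) ^ 2) := by
    intro x
    have h1 : Real.exp (12 / 5 * ((x - 1 / 2) * (p - x))) ≤ _ := exp_le_quad (by
      -- By AM-GM, `(x - 1/2) * (p - x) ≤ (p - 1/2)² / 4 ≤ 1/16`.
      nlinarith [sq_nonneg (2 * x - 1 / 2 - p), hp.1, hp.2])
    rw [mul_add, Real.exp_add, mul_comm]
    exact mul_le_mul he h1 (Real.exp_pos _).le (by norm_num)
  unfold expFactor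
  rw [integral_indicator measurableSet_Icc, integral_Icc_eq_integral_Ioc,
    ← intervalIntegral.integral_of_le zero_le_one]
  refine (intervalIntegral.integral_mono_on zero_le_one
    (Continuous.intervalIntegrable (by fun_prop) _ _)
    (Continuous.intervalIntegrable (by fun_prop) _ _) fun x _ => hq x).trans ?_
  rw [intervalIntegral.integral_const_mul, integral_quad]
  nlinarith [hp.1, hp.2]

/-- Markov's inequality for a product of one-variable functions; `S` need not be measurable. -/
lemma volume_le_of_one_le_prod {ι : Type*} [Fintype ι] {S : Set (ι → ℝ)} {g : ι → ℝ → ℝ}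
    (hg0 : ∀ i x, 0 ≤ g i x) (hg : ∀ i, Integrable (g i))
    (hS : ∀ x ∈ S, 1 ≤ ∏ i, g i (x i)) :
    volume S ≤ ENNReal.ofReal (∏ i, ∫ x, g i x) := by
  have hint : Integrable (fun x : ι → ℝ => ∏ i, g i (x i)) := Integrable.fintype_prod hg
  rw [← integral_fintype_prod_volume_eq_prod,
    ofReal_integral_eq_lintegral_ofReal hint
      (Filter.Eventually.of_forall fun x => Finset.prod_nonneg fun i _ => hg0 i _)]
  refine (measure_mono fun x hx => ?_).trans
    ((one_mul _).symm.le.trans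
      (mul_meas_ge_le_lintegral₀ hint.aestronglyMeasurable.aemeasurable.ennreal_ofReal 1))
  simpa using hS x hx

/-- A point of the hull at height at most `t₀ = 1/1000` is, in the direction from the centre of the
cube to the point, not much further out than some point of `P`. -/
lemma hull_cases {d : ℕ} (hd : 1 ≤ d) {P : Finset (Fin d → ℝ)}
    (hP : ∀ p ∈ P, p ∈ Set.Icc (0 : Fin d → ℝ) 1) {y : Fin (d + 1) → ℝ}
    (hy : y ∈ convexHull ℝ
            ((fun p : Fin d → ℝ => (Fin.snoc p (0 : ℝ) : Fin (d + 1) → ℝ)) ''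
                (P : Set (Fin d → ℝ)) ∪
             (fun q : Fin d → ℝ => (Fin.snoc q (1 : ℝ) : Fin (d + 1) → ℝ)) ''
                Set.Icc (0 : Fin d → ℝ) 1)) :
    y ∈ Set.Icc (0 : Fin (d + 1) → ℝ) 1 ∧
      (1 / 1000 < y (Fin.last d) ∨
        ∃ p ∈ P, 0 ≤ ∑ i : Fin d,
          ((y i.castSucc - 1 / 2) * (p i - y i.castSucc) + 1 / 1000)) := by
  have hcube : y ∈ Set.Icc (0 : Fin (d + 1) → ℝ) 1 := by
    refine convexHull_min ?_ (convex_Icc _ _) hy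
    rintro _ (⟨p, hp, rfl⟩ | ⟨q, hq, rfl⟩)
    · have := hP p hp
      constructor <;> intro i <;> refine Fin.lastCases ?_ (fun i => ?_) i <;>
        simp
      · exact this.1 i
      · exact this.2 i
    · constructor <;> intro i <;> refine Fin.lastCases ?_ (fun i => ?_) i <;>
        simp
      · exact hq.1 i
      · exact hq.2 i
  refine ⟨hcube, ?_⟩
  by_contra! hcon
  obtain ⟨hlast, hfar⟩ := hcon
  have hd' : (1 : ℝ) ≤ d := by exact_mod_cast hd
  -- The half-space is tilted by the slope `d`: this exceeds the `d/2` by which the functional can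
  -- grow from `y` to a point of the top face, and costs only `d * t₀` at height `t₀`.
  have hhalf : y ∈ {z : Fin (d + 1) → ℝ |
      ∑ i : Fin d, (y i.castSucc - 1 / 2) * z i.castSucc - d * z (Fin.last d) <
      ∑ i : Fin d, (y i.castSucc - 1 / 2) * y i.castSucc - d * (1 / 1000)} := by
    refine convexHull_min ?_ (convex_halfSpace_lt ?_ _) hy
    · rintro _ (⟨p, hp, rfl⟩ | ⟨q, hq, rfl⟩)
      · have := hfar p hp
        simp only [mul_sub, Finset.sum_add_distrib, Finset.sum_sub_distrib, Finset.sum_const,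
          Finset.card_univ, Fintype.card_fin, nsmul_eq_mul] at this
        simp only [Set.mem_ofPred_eq, Fin.snoc_castSucc, Fin.snoc_last]
        linarith
      · have : ∑ i : Fin d, ((y i.castSucc - 1 / 2) * q i - (y i.castSucc - 1 / 2) * y i.castSucc)
            ≤ ∑ i : Fin d, (1 / 2 : ℝ) := by
          refine Finset.sum_le_sum fun i _ => ?_
          have h1 := hcube.1 i.castSucc
          have h2 := hcube.2 i.castSucc
          have h3 := hq.1 i
          have h4 := hq.2 i
          simp only [Pi.zero_apply, Pi.one_apply] at h1 h2 h3 h4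
          nlinarith
        simp only [Finset.sum_sub_distrib, Finset.sum_const,
          Finset.card_univ, Fintype.card_fin, nsmul_eq_mul] at this
        simp only [Set.mem_ofPred_eq, Fin.snoc_castSucc, Fin.snoc_last]
        linarith
    · constructor
      · intro a b
        simp only [Pi.add_apply, mul_add, Finset.sum_add_distrib]
        ring
      · intro c a
        simp only [Pi.smul_apply, smul_eq_mul, mul_sub, Finset.mul_sum]
        congr 1
        · exact Finset.sum_congr rfl fun i _ => by ring
        · ring
  simp only [Set.mem_ofPred_eq] at hhalf
  nlinarith

/-- The set of low points of the cube that are assigned to a given `p` by `hull_cases` has volume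
at most `t₀ * (10/11)^d`. -/
lemma volume_piece_le {d : ℕ} {p : Fin d → ℝ} (hp : p ∈ Set.Icc (0 : Fin d → ℝ) 1) :
    volume {y : Fin (d + 1) → ℝ | y ∈ Set.Icc (0 : Fin (d + 1) → ℝ) 1 ∧
      y (Fin.last d) ≤ 1 / 1000 ∧
      0 ≤ ∑ i : Fin d, ((y i.castSucc - 1 / 2) * (p i - y i.castSucc) + 1 / 1000)} ≤
    ENNReal.ofReal (1 / 1000 * (10 / 11) ^ d) := by
  let g : Fin (d + 1) → ℝ → ℝ :=
    Fin.snoc (α := fun _ => ℝ → ℝ) (fun i => expFactor (p i))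
      ((Set.Icc (0 : ℝ) (1 / 1000)).indicator fun _ => 1)
  have hg0 : ∀ i x, 0 ≤ g i x := by
    intro i x
    refine Fin.lastCases ?_ (fun i => ?_) i
    · simp only [g, Fin.snoc_last]
      exact Set.indicator_nonneg (fun _ _ => zero_le_one) x
    · simp only [g, Fin.snoc_castSucc]
      exact expFactor_nonneg _ _
  have hg : ∀ i, Integrable (g i) := by
    intro i
    refine Fin.lastCases ?_ (fun i => ?_) i
    · simp only [g, Fin.snoc_last]
      exact (integrable_indicator_iff measurableSet_Icc).2
        continuousOn_const.integrableOn_Icc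
    · simp only [g, Fin.snoc_castSucc]
      exact integrable_expFactor _
  refine (volume_le_of_one_le_prod hg0 hg ?_).trans (ENNReal.ofReal_le_ofReal ?_)
  · rintro y ⟨hy, hlast, hsum⟩
    have hy' : ∀ i : Fin d, expFactor (p i) (y i.castSucc) =
        Real.exp (12 / 5 * ((y i.castSucc - 1 / 2) * (p i - y i.castSucc) + 1 / 1000)) :=
      fun i => Set.indicator_of_mem
        (show y i.castSucc ∈ Set.Icc (0 : ℝ) 1 from ⟨hy.1 _, hy.2 _⟩) _
    have hl : (Set.Icc (0 : ℝ) (1 / 1000)).indicator (fun _ => (1 : ℝ)) (y (Fin.last d)) = 1 :=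
      Set.indicator_of_mem
        (show y (Fin.last d) ∈ Set.Icc (0 : ℝ) (1 / 1000) from ⟨hy.1 _, hlast⟩) _
    simp only [Fin.prod_univ_castSucc, g, Fin.snoc_castSucc, Fin.snoc_last, hl, mul_one, hy']
    rw [← Real.exp_sum, ← Finset.mul_sum]
    exact Real.one_le_exp (by positivity)
  · simp only [Fin.prod_univ_castSucc, g, Fin.snoc_castSucc, Fin.snoc_last]
    have hl : ∫ x, (Set.Icc (0 : ℝ) (1 / 1000)).indicator (fun _ => (1 : ℝ)) x = 1 / 1000 := by
      rw [integral_indicator measurableSet_Icc]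
      simp
    rw [hl, mul_comm]
    refine mul_le_mul_of_nonneg_left ?_ (by norm_num)
    refine (Finset.prod_le_prod (fun i _ => integral_nonneg (expFactor_nonneg _))
      fun i _ => integral_expFactor_le ⟨hp.1 i, hp.2 i⟩).trans_eq ?_
    rw [Finset.prod_const, Finset.card_univ, Fintype.card_fin]

/-- there is `t₀ ∈ (0,1)`, independent of `d` and `n`, such that for every
`d ≥ 1` and every `n`-point set `P ⊆ [0,1]^d × {0} ⊆ ℝ^{d+1}`, the `(d+1)`-dimensional
volume of the convex hull `C` of `P ∪ ([0,1]^d × {1})` satisfies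
`vol(C) ≤ (1 - t₀) + (d+1)·n·t₀·(10/11)^d`. -/
theorem convex_hull_volume_bound :
    ∃ t₀ : ℝ, t₀ ∈ Set.Ioo (0 : ℝ) 1 ∧
      ∀ (d n : ℕ), 1 ≤ d →
      ∀ P : Finset (Fin d → ℝ), P.card = n →
        (∀ p ∈ P, p ∈ Set.Icc (0 : Fin d → ℝ) 1) →
        volume (convexHull ℝ
            ((fun p : Fin d → ℝ => (Fin.snoc p (0 : ℝ) : Fin (d + 1) → ℝ)) ''
                (P : Set (Fin d → ℝ)) ∪
             (fun q : Fin d → ℝ => (Fin.snoc q (1 : ℝ) : Fin (d + 1) → ℝ)) ''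
                Set.Icc (0 : Fin d → ℝ) 1)) ≤
          ENNReal.ofReal ((1 - t₀) + (d + 1) * n * t₀ * (10 / 11) ^ d) := by
  refine ⟨1 / 1000, ⟨by norm_num, by norm_num⟩, ?_⟩
  intro d n hd P hn hP
  let lo : Fin (d + 1) → ℝ := Fin.snoc (0 : Fin d → ℝ) (1 / 1000 : ℝ)
  let S : (Fin d → ℝ) → Set (Fin (d + 1) → ℝ) := fun p =>
    {y | y ∈ Set.Icc (0 : Fin (d + 1) → ℝ) 1 ∧ y (Fin.last d) ≤ 1 / 1000 ∧
      0 ≤ ∑ i : Fin d, ((y i.castSucc - 1 / 2) * (p i - y i.castSucc) + 1 / 1000)}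
  have hcover : convexHull ℝ
            ((fun p : Fin d → ℝ => (Fin.snoc p (0 : ℝ) : Fin (d + 1) → ℝ)) ''
                (P : Set (Fin d → ℝ)) ∪
             (fun q : Fin d → ℝ => (Fin.snoc q (1 : ℝ) : Fin (d + 1) → ℝ)) ''
                Set.Icc (0 : Fin d → ℝ) 1) ⊆ Set.Icc lo 1 ∪ ⋃ p ∈ P, S p := by
    intro y hy
    obtain ⟨hc, h⟩ := hull_cases hd hP hy
    rcases lt_or_ge (1 / 1000) (y (Fin.last d)) with hl | hl
    · refine Or.inl ⟨fun i => ?_, hc.2⟩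
      refine Fin.lastCases ?_ (fun i => ?_) i
      · simpa [lo] using hl.le
      · simpa [lo] using hc.1 i.castSucc
    · obtain ⟨p, hp, hs⟩ := h.resolve_left hl.not_gt
      exact Or.inr (Set.mem_biUnion hp ⟨hc, hl, hs⟩)
  have hlo : volume (Set.Icc lo 1) = ENNReal.ofReal (1 - 1 / 1000) := by
    rw [Real.volume_Icc_pi, Fin.prod_univ_castSucc]
    simp [lo]
  have hS : volume (⋃ p ∈ P, S p) ≤ ENNReal.ofReal (n * (1 / 1000 * (10 / 11) ^ d)) := by
    refine (measure_biUnion_finset_le P S).trans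
      ((Finset.sum_le_sum fun p hp => volume_piece_le (hP p hp)).trans_eq ?_)
    rw [Finset.sum_const, hn, nsmul_eq_mul, ENNReal.ofReal_mul (Nat.cast_nonneg n),
      ENNReal.ofReal_natCast]
  refine (measure_mono hcover).trans ((measure_union_le _ _).trans ?_)
  rw [hlo]
  refine (add_le_add_right hS _).trans ?_
  rw [← ENNReal.ofReal_add (by norm_num) (by positivity)]
  apply ENNReal.ofReal_le_ofReal
  have : (0 : ℝ) ≤ d * (n * (1 / 1000 * (10 / 11) ^ d)) := by positivity
  nlinarith
end

section
/- There exists ε_0 ∈ (0, 1/2) such that for every fixed ε ∈ (0, ε_0) and every dimension d ≥ 1: if an adaptive algorithm A using n function values satisfies sup over convex f : [0,1]^d → [0,1] of |INT_d(f) − A(f)| ≤ ε, then n ≥ (1/(d+1))·(11/10)^d·(1 − ε/ε_0). Hence the integration problem for convex functions suffers from the curse of dimensionality. -/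
/-!
The argument exhibits two convex functions that the algorithm cannot tell apart.

Let `m = (1/2,…,1/2)` and `f(x) = 3/4 + |x - m|²/d` on the cube. Its tangent at a point `p` is
the affine function `f(x) - |x - p|²/d`. Let `p_1,…,p_n` be the points at which the algorithm
samples `f`, and let `g` be the maximum of `0` and the tangents at the `p_i`. Then `g` is convex
with `0 ≤ g ≤ f ≤ 1` on the cube and agrees with `f` at every `p_i`, so it produces the same
information as `f`; hence `∫ (f - g) ≤ 2ε`.

On the other hand `f - g ≥ 1/64` at every `x` with `|x - p_i|² ≥ d/64` for all `i`. The part of the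
cube within distance `√(d/64)` of one `p_i` is exponentially small by a Chernoff bound: the
weight `exp(16 (d/64 - |x - p|²))` is at least `1` there and has integral at most
`(exp(1/4) √(π/16))^d ≤ (2/3)^d`. This gives `2ε ≥ (1 - n (2/3)^d)/64`, that is
`n ≥ (3/2)^d (1 - 128 ε)`, which is stronger than the claim with `ε₀ = 1/128`.
-/

open MeasureTheory

namespace ConvexCurse

/-- The strictly convex function `3/4 + |x - m|²/d`, with `m` the centre of the cube. -/
noncomputable def base (d : ℕ) (x : Fin d → ℝ) : ℝ :=
  3 / 4 + (∑ j, (x j - 1 / 2) ^ 2) / d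

/-- The tangent of `base d` at `p`, written as `base d x - |x - p|²/d`. -/
noncomputable def tangent {d : ℕ} (p x : Fin d → ℝ) : ℝ :=
  base d x - (∑ j, (x j - p j) ^ 2) / d

/-- The maximum of `0` and the tangents of `base d` at the points `p i`; the index `none` stands
for the constant function `0`, which keeps the family nonempty when `n = 0`. -/
noncomputable def envelope {d n : ℕ} (p : Fin n → Fin d → ℝ) : (Fin d → ℝ) → ℝ :=
  Finset.univ.sup' Finset.univ_nonempty
    (fun o : Option (Fin n) => o.elim (fun _ => (0 : ℝ)) (fun i => tangent (p i)))

/-- The Chernoff weight `exp(16 (d/64 - |x - p|²))`, in product form. -/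
noncomputable def weight {d : ℕ} (p x : Fin d → ℝ) : ℝ :=
  ∏ j, (Real.exp (1 / 4) * Real.exp (-16 * (x j - p j) ^ 2))

lemma convexOn_base {d : ℕ} (s : Set (Fin d → ℝ)) (hs : Convex ℝ s) :
    ConvexOn ℝ s (base d) := by
  refine ⟨hs, fun x _ y _ a b ha hb hab => ?_⟩
  have hb' : b = 1 - a := by linarith
  subst hb'
  have h : ∑ j, ((a • x + (1 - a) • y) j - 1 / 2) ^ 2 ≤
      a * (∑ j, (x j - 1 / 2) ^ 2) + (1 - a) * ∑ j, (y j - 1 / 2) ^ 2 := by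
    rw [Finset.mul_sum, Finset.mul_sum, ← Finset.sum_add_distrib]
    refine Finset.sum_le_sum fun j _ => ?_
    simp only [Pi.add_apply, Pi.smul_apply, smul_eq_mul]
    nlinarith [mul_nonneg (mul_nonneg ha hb) (sq_nonneg (x j - y j))]
  have h2 := div_le_div_of_nonneg_right h (Nat.cast_nonneg (α := ℝ) d)
  simp only [base, smul_eq_mul]
  rw [add_div, mul_div_assoc, mul_div_assoc] at h2
  linarith

lemma tangent_eq {d : ℕ} (p x : Fin d → ℝ) :
    tangent p x = 3 / 4 + (∑ j, (2 * (p j - 1 / 2) * x j + (1 / 4 - p j ^ 2))) / d := by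
  have : ∑ j, (2 * (p j - 1 / 2) * x j + (1 / 4 - p j ^ 2)) =
      ∑ j, (x j - 1 / 2) ^ 2 - ∑ j, (x j - p j) ^ 2 := by
    rw [← Finset.sum_sub_distrib]
    exact Finset.sum_congr rfl fun j _ => by ring
  rw [this, tangent, base, sub_div]
  ring

lemma convexOn_tangent {d : ℕ} (p : Fin d → ℝ) (s : Set (Fin d → ℝ)) (hs : Convex ℝ s) :
    ConvexOn ℝ s (tangent p) := by
  refine ⟨hs, fun x _ y _ a b ha hb hab => ?_⟩
  have hb' : b = 1 - a := by linarith
  subst hb'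
  have h : ∑ j, (2 * (p j - 1 / 2) * (a • x + (1 - a) • y) j + (1 / 4 - p j ^ 2)) =
      a * (∑ j, (2 * (p j - 1 / 2) * x j + (1 / 4 - p j ^ 2))) +
      (1 - a) * ∑ j, (2 * (p j - 1 / 2) * y j + (1 / 4 - p j ^ 2)) := by
    rw [Finset.mul_sum, Finset.mul_sum, ← Finset.sum_add_distrib]
    refine Finset.sum_congr rfl fun j _ => ?_
    simp only [Pi.add_apply, Pi.smul_apply, smul_eq_mul]
    ring
  simp only [tangent_eq, smul_eq_mul]
  rw [h]
  apply le_of_eq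
  ring

lemma convexOn_envelope {d n : ℕ} (p : Fin n → Fin d → ℝ) (s : Set (Fin d → ℝ))
    (hs : Convex ℝ s) : ConvexOn ℝ s (envelope p) := by
  unfold envelope
  refine Finset.sup'_induction (p := fun f => ConvexOn ℝ s f) _ _
    (fun a ha b hb => ha.sup hb) ?_
  rintro (_ | i) _
  · exact convexOn_const 0 hs
  · exact convexOn_tangent (p i) s hs

lemma continuous_base (d : ℕ) : Continuous (base d) := by
  unfold base; fun_prop

lemma continuous_tangent {d : ℕ} (p : Fin d → ℝ) : Continuous (tangent p) := by
  unfold tangent base; fun_prop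

lemma continuous_weight {d : ℕ} (p : Fin d → ℝ) : Continuous (weight p) := by
  unfold weight; fun_prop

lemma continuous_envelope {d n : ℕ} (p : Fin n → Fin d → ℝ) : Continuous (envelope p) := by
  unfold envelope
  refine Finset.sup'_induction (p := fun f : (Fin d → ℝ) → ℝ => Continuous f) _ _
    (fun a ha b hb => ha.sup hb) ?_
  rintro (_ | i) _
  · exact continuous_const
  · exact continuous_tangent (p i)

lemma base_ge {d : ℕ} (x : Fin d → ℝ) : 3 / 4 ≤ base d x := by
  unfold base
  have : 0 ≤ (∑ j, (x j - 1 / 2) ^ 2) / (d : ℝ) := by positivity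
  linarith

lemma base_le_one {d : ℕ} (hd : 1 ≤ d) {x : Fin d → ℝ} (hx : x ∈ Set.Icc (0 : Fin d → ℝ) 1) :
    base d x ≤ 1 := by
  have hd' : (0 : ℝ) < d := by exact_mod_cast hd
  have h : ∑ j, (x j - 1 / 2) ^ 2 ≤ ∑ _j : Fin d, (1 / 4 : ℝ) := by
    refine Finset.sum_le_sum fun j _ => ?_
    have h0 : 0 ≤ x j := hx.1 j
    have h1 : x j ≤ 1 := hx.2 j
    nlinarith
  simp only [Finset.sum_const, Finset.card_univ, Fintype.card_fin, nsmul_eq_mul] at h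
  have : (∑ j, (x j - 1 / 2) ^ 2) / (d : ℝ) ≤ 1 / 4 := by
    rw [div_le_iff₀ hd']; linarith
  unfold base
  linarith

lemma tangent_le_base {d : ℕ} (p x : Fin d → ℝ) : tangent p x ≤ base d x := by
  unfold tangent
  have : 0 ≤ (∑ j, (x j - p j) ^ 2) / (d : ℝ) := by positivity
  linarith

lemma tangent_self {d : ℕ} (p : Fin d → ℝ) : tangent p p = base d p := by
  simp [tangent]

lemma envelope_apply {d n : ℕ} (p : Fin n → Fin d → ℝ) (x : Fin d → ℝ) :
    envelope p x = Finset.univ.sup' Finset.univ_nonempty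
      (fun o : Option (Fin n) => o.elim (0 : ℝ) (fun i => tangent (p i) x)) := by
  unfold envelope
  rw [Finset.sup'_apply]
  congr 1
  ext (_ | i) <;> rfl

lemma envelope_le {d n : ℕ} (p : Fin n → Fin d → ℝ) (x : Fin d → ℝ) (c : ℝ) (hc : 0 ≤ c)
    (h : ∀ i, tangent (p i) x ≤ c) : envelope p x ≤ c := by
  rw [envelope_apply]
  refine Finset.sup'_le _ _ ?_
  rintro (_ | i) _
  · exact hc
  · exact h i

lemma envelope_nonneg {d n : ℕ} (p : Fin n → Fin d → ℝ) (x : Fin d → ℝ) : 0 ≤ envelope p x := by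
  rw [envelope_apply]
  exact Finset.le_sup' (fun o : Option (Fin n) => o.elim (0 : ℝ) (fun i => tangent (p i) x))
    (Finset.mem_univ none)

lemma tangent_le_envelope {d n : ℕ} (p : Fin n → Fin d → ℝ) (x : Fin d → ℝ) (i : Fin n) :
    tangent (p i) x ≤ envelope p x := by
  rw [envelope_apply]
  exact Finset.le_sup' (fun o : Option (Fin n) => o.elim (0 : ℝ) (fun i => tangent (p i) x))
    (Finset.mem_univ (some i))

lemma envelope_le_base {d n : ℕ} (p : Fin n → Fin d → ℝ) (x : Fin d → ℝ) :
    envelope p x ≤ base d x :=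
  envelope_le p x _ (by linarith [base_ge x]) fun i => tangent_le_base _ _

lemma envelope_self {d n : ℕ} (p : Fin n → Fin d → ℝ) (i : Fin n) :
    envelope p (p i) = base d (p i) :=
  le_antisymm (envelope_le_base p _) (tangent_self (p i) ▸ tangent_le_envelope p (p i) i)

/-- The algorithm sees the same data for `base d` and for the envelope of the tangents at the
points where it samples `base d`. -/
lemma infoValues_envelope {d n : ℕ} (t : (k : Fin n) → (Fin k.1 → ℝ) → (Fin d → ℝ)) :
    infoValues t (envelope fun k : Fin n =>
      t k (fun j => infoValues t (base d) ⟨j.1, j.2.trans k.2⟩)) = infoValues t (base d) := by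
  set p : Fin n → Fin d → ℝ := fun k =>
    t k (fun j => infoValues t (base d) ⟨j.1, j.2.trans k.2⟩) with hp
  have key : ∀ m (hm : m < n), infoValues t (envelope p) ⟨m, hm⟩ = infoValues t (base d) ⟨m, hm⟩ := by
    intro m
    induction m using Nat.strong_induction_on with
    | _ m ih =>
      intro hm
      have h : (fun j : Fin m => infoValues t (envelope p) ⟨j.1, j.2.trans hm⟩) =
          fun j : Fin m => infoValues t (base d) ⟨j.1, j.2.trans hm⟩ :=
        funext fun j => ih j.1 j.2 (j.2.trans hm)
      rw [infoValues]
      conv_rhs => rw [infoValues]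
      exact (congrArg (fun y => envelope p (t ⟨m, hm⟩ y)) h).trans (envelope_self p ⟨m, hm⟩)
  exact funext fun k => key k.1 k.2

lemma weight_eq_exp {d : ℕ} (p x : Fin d → ℝ) :
    weight p x = Real.exp (16 * ((d : ℝ) / 64 - ∑ j, (x j - p j) ^ 2)) := by
  unfold weight
  simp_rw [← Real.exp_add]
  rw [← Real.exp_sum]
  congr 1
  rw [Finset.sum_add_distrib, ← Finset.mul_sum]
  simp
  ring

lemma weight_nonneg {d : ℕ} (p x : Fin d → ℝ) : 0 ≤ weight p x := by
  rw [weight_eq_exp]; positivity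

/-- If `x` is at squared distance at least `d/64` from all the points, the gap is at least `1/64`;
otherwise some weight is at least `1` and the left side is nonpositive. -/
lemma gap_ge {d n : ℕ} (hd : 1 ≤ d) (p : Fin n → Fin d → ℝ) (x : Fin d → ℝ) :
    1 / 64 * (1 - ∑ i, weight (p i) x) ≤ base d x - envelope p x := by
  have hd' : (0 : ℝ) < d := by exact_mod_cast hd
  have hs : 0 ≤ ∑ i, weight (p i) x := Finset.sum_nonneg fun i _ => weight_nonneg _ _
  by_cases h : ∀ i, (d : ℝ) / 64 ≤ ∑ j, (x j - p i j) ^ 2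
  · have := envelope_le p x (base d x - 1 / 64) (by linarith [base_ge x]) fun i => by
      have h1 : 1 / 64 ≤ (∑ j, (x j - p i j) ^ 2) / (d : ℝ) := by
        rw [le_div_iff₀ hd']; linarith [h i]
      unfold tangent
      linarith
    linarith
  · push Not at h
    obtain ⟨i, hi⟩ := h
    have h1 : 1 ≤ weight (p i) x := by
      rw [weight_eq_exp]
      exact Real.one_le_exp (by linarith)
    have h2 : weight (p i) x ≤ ∑ i, weight (p i) x :=
      Finset.single_le_sum (f := fun i => weight (p i) x) (fun i _ => weight_nonneg _ _)
        (Finset.mem_univ i)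
    linarith [envelope_le_base p x]

lemma integrable_factor (a : ℝ) :
    Integrable fun y : ℝ => Real.exp (1 / 4) * Real.exp (-16 * (y - a) ^ 2) :=
  ((integrable_exp_neg_mul_sq (b := 16) (by norm_num)).comp_sub_right a).const_mul _

lemma integral_factor_le (a : ℝ) :
    ∫ y : ℝ, Real.exp (1 / 4) * Real.exp (-16 * (y - a) ^ 2) ≤ 2 / 3 := by
  rw [integral_const_mul, integral_sub_right_eq_self (fun y : ℝ => Real.exp (-16 * y ^ 2)) a,
    integral_gaussian]
  have h1 : √(Real.pi / 16) ≤ 1 / 2 := by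
    rw [Real.sqrt_le_left (by norm_num)]
    linarith [Real.pi_le_four]
  have h2 : Real.exp (1 / 4) ≤ 4 / 3 := by
    have := Real.one_sub_le_exp_neg (1 / 4)
    rw [Real.exp_neg] at this
    have h3 := Real.exp_pos (1 / 4)
    have h4 : (1 - 1 / 4) * Real.exp (1 / 4) ≤ 1 := by
      calc (1 - 1 / 4) * Real.exp (1 / 4) ≤ (Real.exp (1 / 4))⁻¹ * Real.exp (1 / 4) := by gcongr
        _ = 1 := inv_mul_cancel₀ h3.ne'
    linarith
  calc Real.exp (1 / 4) * √(Real.pi / 16) ≤ 4 / 3 * (1 / 2) := by gcongr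
    _ = 2 / 3 := by norm_num

lemma integral_weight_le {d : ℕ} (p : Fin d → ℝ) :
    ∫ x in Set.Icc (0 : Fin d → ℝ) 1, weight p x ≤ (2 / 3) ^ d := by
  have hint : Integrable (weight p) :=
    Integrable.fintype_prod (f := fun j (y : ℝ) =>
      Real.exp (1 / 4) * Real.exp (-16 * (y - p j) ^ 2)) fun j => integrable_factor (p j)
  calc ∫ x in Set.Icc (0 : Fin d → ℝ) 1, weight p x
      ≤ ∫ x, weight p x :=
        setIntegral_le_integral hint (Filter.Eventually.of_forall fun x => weight_nonneg p x)
    _ = ∏ j, ∫ y : ℝ, Real.exp (1 / 4) * Real.exp (-16 * (y - p j) ^ 2) :=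
        integral_fintype_prod_volume_eq_prod (fun j (y : ℝ) =>
          Real.exp (1 / 4) * Real.exp (-16 * (y - p j) ^ 2))
    _ ≤ ∏ _j : Fin d, (2 / 3 : ℝ) :=
        Finset.prod_le_prod (fun j _ => integral_nonneg fun y => by positivity)
          fun j _ => integral_factor_le (p j)
    _ = (2 / 3) ^ d := by rw [Finset.prod_const, Finset.card_univ, Fintype.card_fin]

lemma volume_cube (d : ℕ) : (volume : Measure (Fin d → ℝ)).real (Set.Icc 0 1) = 1 := by
  simp [Measure.real, Real.volume_Icc_pi]

lemma integral_gap_ge {d n : ℕ} (hd : 1 ≤ d) (p : Fin n → Fin d → ℝ) :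
    1 / 64 * (1 - n * (2 / 3) ^ d) ≤ (∫ x in Set.Icc (0 : Fin d → ℝ) 1, base d x) -
      ∫ x in Set.Icc (0 : Fin d → ℝ) 1, envelope p x := by
  have hI : ∀ f : (Fin d → ℝ) → ℝ, Continuous f →
      IntegrableOn f (Set.Icc (0 : Fin d → ℝ) 1) := fun f hf =>
    hf.continuousOn.integrableOn_compact isCompact_Icc
  have hw : Continuous fun x => ∑ i, weight (p i) x :=
    continuous_finsetSum _ fun i _ => continuous_weight (p i)
  rw [← integral_sub (hI _ (continuous_base d)) (hI _ (continuous_envelope p))]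
  refine le_trans ?_ (integral_mono (f := fun x => 1 / 64 * (1 - ∑ i, weight (p i) x))
    (hI _ (continuous_const.mul (continuous_const.sub hw)))
    ((hI _ (continuous_base d)).sub (hI _ (continuous_envelope p))) fun x => gap_ge hd p x)
  rw [integral_const_mul, integral_sub (hI _ continuous_const) (hI _ hw),
    integral_finsetSum _ fun i _ => hI _ (continuous_weight (p i)), setIntegral_const,
    volume_cube]
  have : ∑ i, ∫ x in Set.Icc (0 : Fin d → ℝ) 1, weight (p i) x ≤ n * (2 / 3) ^ d := by
    calc _ ≤ ∑ _i : Fin n, (2 / 3 : ℝ) ^ d :=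
          Finset.sum_le_sum fun i _ => integral_weight_le (p i)
      _ = n * (2 / 3) ^ d := by simp
  simp only [smul_eq_mul, mul_one]
  linarith

end ConvexCurse

/-- there exists `ε₀ ∈ (0,1/2)` such that for every `ε ∈ (0,ε₀)` and `d ≥ 1`:
if an adaptive algorithm using `n` function values has worst case error at most `ε` for
integration over convex functions `f : [0,1]^d → [0,1]`, then
`n ≥ (1/(d+1))·(11/10)^d·(1 - ε/ε₀)`: the curse of dimensionality for convex integration. -/
theorem convex_integration_curse :
    ∃ ε₀ : ℝ, ε₀ ∈ Set.Ioo (0 : ℝ) (1 / 2) ∧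
      ∀ ε : ℝ, ε ∈ Set.Ioo (0 : ℝ) ε₀ →
      ∀ (d n : ℕ), 1 ≤ d →
      ∀ (t : (k : Fin n) → (Fin k.1 → ℝ) → (Fin d → ℝ)),
        (∀ k y, t k y ∈ Set.Icc (0 : Fin d → ℝ) 1) →
      ∀ φ : (Fin n → ℝ) → ℝ,
        (∀ f : (Fin d → ℝ) → ℝ,
          ConvexOn ℝ (Set.Icc (0 : Fin d → ℝ) 1) f →
          (∀ x ∈ Set.Icc (0 : Fin d → ℝ) 1, f x ∈ Set.Icc (0 : ℝ) 1) →
          |(∫ x in Set.Icc (0 : Fin d → ℝ) 1, f x) - φ (infoValues t f)| ≤ ε) →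
        (n : ℝ) ≥ (1 / (d + 1)) * (11 / 10) ^ d * (1 - ε / ε₀) := by
  refine ⟨1 / 128, by norm_num, ?_⟩
  rintro ε ⟨hε0, hε⟩ d n hd t _ φ hA
  set p : Fin n → Fin d → ℝ := fun k =>
    t k (fun j => infoValues t (ConvexCurse.base d) ⟨j.1, j.2.trans k.2⟩) with hp
  have h1 := hA (ConvexCurse.base d) (ConvexCurse.convexOn_base _ (convex_Icc _ _))
    fun x hx => ⟨by linarith [ConvexCurse.base_ge x], ConvexCurse.base_le_one hd hx⟩
  have h2 := hA (ConvexCurse.envelope p) (ConvexCurse.convexOn_envelope p _ (convex_Icc _ _))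
    fun x hx => ⟨ConvexCurse.envelope_nonneg p x,
      (ConvexCurse.envelope_le_base p x).trans (ConvexCurse.base_le_one hd hx)⟩
  rw [ConvexCurse.infoValues_envelope t] at h2
  have h3 := ConvexCurse.integral_gap_ge hd p
  rw [abs_le] at h1 h2
  have h4 : 1 - ε / (1 / 128) ≤ n * (2 / 3 : ℝ) ^ d := by linarith [h1.2, h2.1]
  have hpos : 0 ≤ 1 - ε / (1 / 128) := by linarith
  have h5 : (1 / ((d : ℝ) + 1)) * (11 / 10) ^ d ≤ (3 / 2) ^ d := by
    calc (1 / ((d : ℝ) + 1)) * (11 / 10) ^ d ≤ 1 * (3 / 2) ^ d := by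
          have h6 : 1 / ((d : ℝ) + 1) ≤ 1 := by
            rw [div_le_one (by positivity)]
            linarith [Nat.cast_nonneg (α := ℝ) d]
          have h7 : (11 / 10 : ℝ) ^ d ≤ (3 / 2) ^ d :=
            pow_le_pow_left₀ (by norm_num) (by norm_num) d
          gcongr
      _ = (3 / 2) ^ d := one_mul _
  calc (1 / ((d : ℝ) + 1)) * (11 / 10) ^ d * (1 - ε / (1 / 128))
      ≤ (3 / 2) ^ d * (n * (2 / 3 : ℝ) ^ d) := by gcongr
    _ = n * ((3 / 2) * (2 / 3 : ℝ)) ^ d := by rw [mul_pow]; ring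
    _ = n := by norm_num
end

section
/- Let d ≥ 1 and let x_1, …, x_n ∈ [0,1]^d. Define f⁺ : [0,1]^d → ℝ by f⁺(x) = sup{ f(x) : f : [0,1]^d → [0,1] convex with f(x_j) = 0 for all j = 1, …, n }. Then f⁺ is convex, takes values in [0,1], satisfies f⁺(x_j) = 0 for all j, and ∫_{[0,1]^d} f⁺(x) dx = 1 − vol_{d+1}(C), where C ⊆ ℝ^{d+1} is the convex hull of the point set {(x_j, 0) : j = 1, …, n} ∪ ([0,1]^d × {1}). -/
/-!
The convex hull `C` of the statement is exactly the closed region between `F` and `1` over the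
cube.

* `C` lies above the graph of `F`: the set `{(y, t) | y ∈ [0,1]^d, F y ≤ t ≤ 1}` is convex and
  contains the generators of `C`.
* Every `(y, t)` with `y ∈ [0,1]^d` and `F y ≤ t ≤ 1` lies in `C`: the lower boundary `g y = inf {t | (y, t) ∈ C}`
  is convex, `[0,1]`-valued and vanishes at the sample points, so it competes in the supremum and
  `g ≤ F`; the segment from `(y, g y)` to `(y, 1)` is contained in `C`.

Hence the fibre of `C` over `y ∈ [0,1]^d` has length `1 - F y`, and Fubini gives the volume of `C`. The cube
is the hull of its vertices, so `C` is the hull of a finite set and therefore compact; this makes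
the infimum defining `g` attained, and gives the measurability needed for Fubini. The measurability
of `F` on the cube follows from that of the fibre lengths.
-/

open MeasureTheory

lemma snoc_combo {d : ℕ} (a b : ℝ) (y z : Fin d → ℝ) (s t : ℝ) :
    (Fin.snoc (a • y + b • z) (a * s + b * t) : Fin (d + 1) → ℝ) =
      a • (Fin.snoc y s : Fin (d + 1) → ℝ) + b • (Fin.snoc z t : Fin (d + 1) → ℝ) := by
  funext i
  refine Fin.lastCases ?_ (fun i => ?_) i <;> simp

/-- The hull in question is the hull of a finite set, since the cube is the hull of its
vertices. -/
lemma isCompact_hull {d n : ℕ} (x : Fin n → (Fin d → ℝ)) :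
    IsCompact (convexHull ℝ
        ((Set.range fun j : Fin n => (Fin.snoc (x j) (0 : ℝ) : Fin (d + 1) → ℝ)) ∪
         (fun q : Fin d → ℝ => (Fin.snoc q (1 : ℝ) : Fin (d + 1) → ℝ)) ''
            Set.Icc (0 : Fin d → ℝ) 1)) := by
  set A := Set.range fun j : Fin n => (Fin.snoc (x j) (0 : ℝ) : Fin (d + 1) → ℝ)
  set φ := fun q : Fin d → ℝ => (Fin.snoc q (1 : ℝ) : Fin (d + 1) → ℝ)
  let V : Set (Fin d → ℝ) := Set.univ.pi fun _ => {0, 1}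
  have hVfin : V.Finite := Set.Finite.pi fun _ => Set.toFinite {0, 1}
  have hV : convexHull ℝ V = Set.Icc 0 1 := by
    rw [convexHull_pi, ← Set.pi_univ_Icc]
    refine Set.pi_congr rfl fun i _ => ?_
    rw [convexHull_pair, segment_eq_Icc (by norm_num)]
    rfl
  have hVsub : V ⊆ Set.Icc 0 1 := hV ▸ subset_convexHull ℝ V
  have key : convexHull ℝ (A ∪ φ '' Set.Icc 0 1) = convexHull ℝ (A ∪ φ '' V) := by
    apply Set.Subset.antisymm
    · refine convexHull_min (Set.union_subset
        (Set.subset_union_left.trans (subset_convexHull ℝ _)) ?_) (convex_convexHull ℝ _)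
      rw [Set.image_subset_iff, ← hV]
      refine convexHull_min (fun v hv => subset_convexHull ℝ _ (Or.inr ⟨v, hv, rfl⟩)) ?_
      intro y hy z hz a b ha hb hab
      have := convex_convexHull ℝ (A ∪ φ '' V) hy hz ha hb hab
      have h2 := snoc_combo a b y z 1 1
      rw [mul_one, mul_one, hab] at h2
      simpa only [Set.mem_preimage, φ, h2] using this
    · exact convexHull_mono (Set.union_subset_union_right _ (Set.image_mono hVsub))
  rw [key]
  exact ((Set.finite_range _).union (hVfin.image φ)).isCompact_convexHull ℝ

/-- for sample points `x_1, …, x_n ∈ [0,1]^d`, the pointwise supremum `f⁺` of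
all convex `f : [0,1]^d → [0,1]` vanishing at the sample points is convex, `[0,1]`-valued,
vanishes at the sample points, and `∫_{[0,1]^d} f⁺ = 1 - vol_{d+1}(C)` where `C` is the
convex hull of `{(x_j, 0)} ∪ ([0,1]^d × {1})` in `ℝ^{d+1}`. -/
theorem convex_sup_fooling_function (d n : ℕ) (hd : 1 ≤ d)
    (x : Fin n → (Fin d → ℝ)) (hx : ∀ j, x j ∈ Set.Icc (0 : Fin d → ℝ) 1)
    (F : (Fin d → ℝ) → ℝ)
    (hF : ∀ y : Fin d → ℝ, F y = sSup {r : ℝ | ∃ f : (Fin d → ℝ) → ℝ,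
      ConvexOn ℝ (Set.Icc (0 : Fin d → ℝ) 1) f ∧
      (∀ z ∈ Set.Icc (0 : Fin d → ℝ) 1, f z ∈ Set.Icc (0 : ℝ) 1) ∧
      (∀ j, f (x j) = 0) ∧ f y = r}) :
    ConvexOn ℝ (Set.Icc (0 : Fin d → ℝ) 1) F ∧
    (∀ y ∈ Set.Icc (0 : Fin d → ℝ) 1, F y ∈ Set.Icc (0 : ℝ) 1) ∧
    (∀ j, F (x j) = 0) ∧
    (∫ y in Set.Icc (0 : Fin d → ℝ) 1, F y) =
      1 - (volume (convexHull ℝ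
        ((Set.range fun j : Fin n => (Fin.snoc (x j) (0 : ℝ) : Fin (d + 1) → ℝ)) ∪
         (fun q : Fin d → ℝ => (Fin.snoc q (1 : ℝ) : Fin (d + 1) → ℝ)) ''
            Set.Icc (0 : Fin d → ℝ) 1))).toReal := by
  classical
  set Q : Set (Fin d → ℝ) := Set.Icc 0 1 with hQ
  have hQc : Convex ℝ Q := convex_Icc 0 1
  have hcomp := isCompact_hull x
  set C := convexHull ℝ
        ((Set.range fun j : Fin n => (Fin.snoc (x j) (0 : ℝ) : Fin (d + 1) → ℝ)) ∪
         (fun q : Fin d → ℝ => (Fin.snoc q (1 : ℝ) : Fin (d + 1) → ℝ)) '' Q) with hC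
  -- `leF` and `Fle`: on the cube, `F` is the least upper bound of the admissible functions.
  have leF : ∀ f : (Fin d → ℝ) → ℝ, ConvexOn ℝ Q f → (∀ z ∈ Q, f z ∈ Set.Icc (0 : ℝ) 1) →
      (∀ j, f (x j) = 0) → ∀ y ∈ Q, f y ≤ F y := by
    intro f h1 h2 h3 y hy
    rw [hF]
    refine le_csSup ⟨1, ?_⟩ ⟨f, h1, h2, h3, rfl⟩
    rintro r ⟨f, -, h2, -, rfl⟩
    exact (h2 y hy).2
  have Fle : ∀ y, ∀ c : ℝ, (∀ f : (Fin d → ℝ) → ℝ, ConvexOn ℝ Q f →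
      (∀ z ∈ Q, f z ∈ Set.Icc (0 : ℝ) 1) → (∀ j, f (x j) = 0) → f y ≤ c) → F y ≤ c := by
    intro y c h
    rw [hF]
    refine csSup_le ⟨0, fun _ => 0, convexOn_const 0 hQc, fun _ _ => by simp, by simp, rfl⟩ ?_
    rintro r ⟨f, h1, h2, h3, rfl⟩
    exact h f h1 h2 h3
  have F01 : ∀ y ∈ Q, F y ∈ Set.Icc (0 : ℝ) 1 := fun y hy =>
    ⟨leF (fun _ => 0) (convexOn_const 0 hQc) (fun _ _ => by simp) (by simp) y hy,
      Fle y 1 fun f _ h2 _ => (h2 y hy).2⟩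
  have Fx : ∀ j, F (x j) = 0 := fun j =>
    le_antisymm (Fle _ 0 fun f _ _ h3 => (h3 j).le) (F01 _ (hx j)).1
  have Fconv : ConvexOn ℝ Q F := by
    refine ⟨hQc, fun y hy z hz a b ha hb hab => Fle _ _ fun f h1 h2 h3 => ?_⟩
    refine (h1.2 hy hz ha hb hab).trans ?_
    simp only [smul_eq_mul]
    exact add_le_add (mul_le_mul_of_nonneg_left (leF f h1 h2 h3 y hy) ha)
      (mul_le_mul_of_nonneg_left (leF f h1 h2 h3 z hz) hb)
  refine ⟨Fconv, F01, Fx, ?_⟩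
  have Csub : ∀ y t, (Fin.snoc y t : Fin (d + 1) → ℝ) ∈ C → y ∈ Q ∧ F y ≤ t ∧ t ≤ 1 := by
    let E : Set (Fin (d + 1) → ℝ) :=
      {p | (Fin.init p : Fin d → ℝ) ∈ Q ∧ F (Fin.init p) ≤ p (Fin.last d) ∧ p (Fin.last d) ≤ 1}
    have hE : Convex ℝ E := by
      rintro p ⟨p1, p2, p3⟩ q ⟨q1, q2, q3⟩ a b ha hb hab
      have hi : (Fin.init (a • p + b • q) : Fin d → ℝ) =
        a • (Fin.init p : Fin d → ℝ) + b • (Fin.init q : Fin d → ℝ) := rfl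
      refine ⟨hi ▸ hQc p1 q1 ha hb hab, ?_, ?_⟩
      · rw [hi]
        refine (Fconv.2 p1 q1 ha hb hab).trans ?_
        simp only [smul_eq_mul, Pi.add_apply, Pi.smul_apply]
        gcongr
      · simp only [smul_eq_mul, Pi.add_apply, Pi.smul_apply]
        nlinarith
    have hCE : C ⊆ E := by
      refine convexHull_min (Set.union_subset ?_ ?_) hE
      · rintro _ ⟨j, rfl⟩
        simp only [E, Set.mem_ofPred_eq, Fin.init_snoc, Fin.snoc_last]
        exact ⟨hx j, (Fx j).le, zero_le_one⟩
      · rintro _ ⟨q, hq, rfl⟩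
        simp only [E, Set.mem_ofPred_eq, Fin.init_snoc, Fin.snoc_last]
        exact ⟨hq, (F01 q hq).2, le_rfl⟩
    intro y t h
    simpa only [E, Set.mem_ofPred_eq, Fin.init_snoc, Fin.snoc_last] using hCE h
  have Ctop : ∀ y ∈ Q, (Fin.snoc y (1 : ℝ) : Fin (d + 1) → ℝ) ∈ C := fun y hy =>
    subset_convexHull ℝ _ (Or.inr ⟨y, hy, rfl⟩)
  have Cconv : Convex ℝ C := convex_convexHull ℝ _
  have Cclosed : IsClosed C := hcomp.isClosed
  let g : (Fin d → ℝ) → ℝ := fun y => sInf {t : ℝ | (Fin.snoc y t : Fin (d + 1) → ℝ) ∈ C}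
  have gbdd : ∀ y, BddBelow {t : ℝ | (Fin.snoc y t : Fin (d + 1) → ℝ) ∈ C} := fun y =>
    ⟨0, fun t ht => (F01 y (Csub y t ht).1).1.trans (Csub y t ht).2.1⟩
  have gle : ∀ y t, (Fin.snoc y t : Fin (d + 1) → ℝ) ∈ C → g y ≤ t := fun y t h =>
    csInf_le (gbdd y) h
  have gmem : ∀ y ∈ Q, (Fin.snoc y (g y) : Fin (d + 1) → ℝ) ∈ C := by
    intro y hy
    have hcl : IsClosed {t : ℝ | (Fin.snoc y t : Fin (d + 1) → ℝ) ∈ C} :=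
      Cclosed.preimage (Continuous.finSnoc continuous_const continuous_id)
    exact hcl.csInf_mem ⟨1, Ctop y hy⟩ (gbdd y)
  have gF : ∀ y ∈ Q, g y ≤ F y := by
    refine leF g ⟨hQc, fun y hy z hz a b ha hb hab => gle _ _ ?_⟩ ?_ ?_
    · rw [smul_eq_mul, smul_eq_mul, snoc_combo]
      exact Cconv (gmem y hy) (gmem z hz) ha hb hab
    · intro z hz
      have := Csub z _ (gmem z hz)
      exact ⟨(F01 z hz).1.trans this.2.1, this.2.2⟩
    · intro j
      refine le_antisymm (gle _ _ (subset_convexHull ℝ _ (Or.inl ⟨j, rfl⟩))) ?_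
      exact (Fx j).symm.le.trans (Csub _ _ (gmem _ (hx j))).2.1
  have Csup : ∀ y ∈ Q, ∀ t, F y ≤ t → t ≤ 1 → (Fin.snoc y t : Fin (d + 1) → ℝ) ∈ C := by
    intro y hy t h1 h2
    have ht : t ∈ segment ℝ (g y) 1 := by
      rw [segment_eq_Icc (((gF y hy).trans h1).trans h2)]
      exact ⟨(gF y hy).trans h1, h2⟩
    obtain ⟨a, b, ha, hb, hab, rfl⟩ := ht
    have := Cconv (gmem y hy) (Ctop y hy) ha hb hab
    rw [← snoc_combo, ← add_smul, hab, one_smul] at this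
    exact this
  have fib : ∀ y, {t : ℝ | (Fin.snoc y t : Fin (d + 1) → ℝ) ∈ C} =
      if y ∈ Q then Set.Icc (F y) 1 else ∅ := by
    intro y
    ext t
    split_ifs with hy
    · exact ⟨fun h => (Csub y t h).2, fun h => Csup y hy t h.1 h.2⟩
    · exact ⟨fun h => hy (Csub y t h).1, fun h => h.elim⟩
  let e := MeasurableEquiv.piFinSuccAbove (fun _ : Fin (d + 1) => ℝ) (Fin.last d)
  have he : MeasurePreserving e.symm :=
    (volume_preserving_piFinSuccAbove (fun _ : Fin (d + 1) => ℝ) (Fin.last d)).symm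
  have Cmeas : MeasurableSet C := Cclosed.measurableSet
  have hS : MeasurableSet (e.symm ⁻¹' C) := e.symm.measurable Cmeas
  have hfib : ∀ y, (fun t : ℝ => (t, y)) ⁻¹' (e.symm ⁻¹' C) =
      if y ∈ Q then Set.Icc (F y) 1 else ∅ := by
    intro y
    rw [← fib y]
    ext t
    have : e.symm (t, y) = (Fin.snoc y t : Fin (d + 1) → ℝ) := Fin.insertNth_last' t y
    simp only [Set.mem_preimage, Set.mem_ofPred_eq, this]
  have hmeas : Measurable fun y => volume ((fun t : ℝ => (t, y)) ⁻¹' (e.symm ⁻¹' C)) :=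
    measurable_measure_prodMk_right hS
  have hlen : ∀ y, volume ((fun t : ℝ => (t, y)) ⁻¹' (e.symm ⁻¹' C)) =
      Q.indicator (fun y => ENNReal.ofReal (1 - F y)) y := by
    intro y
    rw [hfib]
    by_cases hy : y ∈ Q <;> simp [hy]
  have hQm : MeasurableSet Q := measurableSet_Icc
  have hvol : volume C = ∫⁻ y in Q, ENNReal.ofReal (1 - F y) := by
    rw [← he.measure_preimage Cmeas.nullMeasurableSet, Measure.volume_eq_prod,
      Measure.prod_apply_symm hS, ← lintegral_indicator hQm]
    exact lintegral_congr hlen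
  have hQvol : volume Q = 1 := by
    rw [hQ, Real.volume_Icc_pi]
    simp
  have hae : AEStronglyMeasurable (fun y => 1 - F y) (volume.restrict Q) := by
    refine (hmeas.ennreal_toReal.aestronglyMeasurable).congr ?_
    filter_upwards [ae_restrict_mem hQm] with y hy
    rw [hlen, Set.indicator_of_mem hy, ENNReal.toReal_ofReal (by linarith [(F01 y hy).2])]
  have hint : Integrable (fun y => 1 - F y) (volume.restrict Q) := by
    have : IsFiniteMeasure (volume.restrict Q) := ⟨by simp [hQvol]⟩
    refine Integrable.of_bound hae 1 ?_
    filter_upwards [ae_restrict_mem hQm] with y hy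
    rw [Real.norm_eq_abs, abs_le]
    constructor <;> linarith [(F01 y hy).1, (F01 y hy).2]
  have hone : Integrable (fun _ : Fin d → ℝ => (1 : ℝ)) (volume.restrict Q) :=
    integrableOn_const (by simp [hQvol])
  have h1 : ∫ y in Q, (1 - F y) = (volume C).toReal := by
    rw [hvol]
    refine integral_eq_lintegral_of_nonneg_ae ?_ hae
    filter_upwards [ae_restrict_mem hQm] with y hy
    exact sub_nonneg.2 (F01 y hy).2
  calc ∫ y in Q, F y = ∫ y in Q, ((1 : ℝ) - (1 - F y)) := by simp
    _ = (∫ _ in Q, (1 : ℝ)) - ∫ y in Q, (1 - F y) := integral_sub hone hint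
    _ = 1 - (volume C).toReal := by
      rw [h1]
      simp [Measure.real, hQvol]
end

section
/- (Elekes) Let P be a finite set of points in ℝ^d and let w ∈ ℝ^d be arbitrary. Then the convex hull of P is contained in the union over v ∈ P of the closed balls with center (v + w)/2 and radius ‖v − w‖/2 (i.e., the balls having the segments [v, w] as diameters). -/
/-- Elekes: for a finite set `P ⊆ ℝ^d` and any `w ∈ ℝ^d`, the convex hull
of `P` is covered by the closed balls with the segments `[v, w]`, `v ∈ P`, as diameters. -/
theorem elekes_ball_covering (d : ℕ) (P : Finset (EuclideanSpace ℝ (Fin d)))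
    (w : EuclideanSpace ℝ (Fin d)) :
    convexHull ℝ (P : Set (EuclideanSpace ℝ (Fin d))) ⊆
      ⋃ v ∈ P, Metric.closedBall ((1 / 2 : ℝ) • (v + w)) (‖v - w‖ / 2) := by
  intro x hx
  by_contra hcon
  simp only [Set.mem_iUnion, not_exists] at hcon
  -- By Thales, `x` lies outside the ball on `[v, w]` iff `⟪x - w, x - v⟫ > 0`. So if `x` is in
  -- no ball, `P` lies in the following open half-space, which has `x` on its boundary.
  have hsub : (P : Set (EuclideanSpace ℝ (Fin d))) ⊆
      {v | innerSL ℝ (x - w) v < innerSL ℝ (x - w) x} := by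
    intro v hv
    have h := hcon v hv
    rw [Metric.mem_closedBall, dist_eq_norm, not_le] at h
    have e1 : x - (1 / 2 : ℝ) • (v + w) = (1 / 2 : ℝ) • ((x - w) + (x - v)) := by module
    have e2 : v - w = (x - w) - (x - v) := by abel
    rw [e1, e2, norm_smul, Real.norm_of_nonneg (by norm_num)] at h
    have hlt : ‖(x - w) - (x - v)‖ < ‖(x - w) + (x - v)‖ := by linarith
    have hsq := pow_lt_pow_left₀ hlt (norm_nonneg _) two_ne_zero
    rw [norm_sub_sq_real, norm_add_sq_real] at hsq
    have hpos : 0 < inner ℝ (x - w) (x - v) := by linarith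
    rw [inner_sub_right] at hpos
    simp only [Set.mem_ofPred_eq, innerSL_apply_apply]
    linarith
  have hmem := convexHull_min hsub
    (convex_halfSpace_lt (innerSL ℝ (x - w)).toLinearMap.isLinear _) hx
  rw [Set.mem_ofPred_eq] at hmem
  exact lt_irrefl _ hmem
end
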